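/- Let n ≥ 1 and represent a third-order tensor of size I₁ × I₂ × n as X : Fin I₁ → Fin I₂ → (ZMod n → ℝ). Fix indices i : Fin I₁ and j : Fin I₂, and suppose s : ZMod n → ℝ is a convolution inverse of the intersection tube X i j, i.e. (X i j) ⋆ s = δ. Define the residual tensor Y by Y p q = X p q - (X p j) ⋆ s ⋆ (X i q). Then for every k : ZMod n, the rank of the complex I₁ × I₂ frontal Fourier slice Ŷ(:,:,k), the matrix with (p,q) entry dft(Y p q) k, equals the rank of the matrix X̂(:,:,k) with (p,q) entry dft(X p q) k, minus 1. -/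

import Mathlib

/-!
Writing `exp (-2πi jk / n)` as the standard additive character of `ZMod n` at `-(jk)` turns circular
convolution into a pointwise product under `dft`. The relation `X i j ⋆ s = δ` then becomes
`A i j * c = 1` on each Fourier slice `A` of `X`, with `c = dft s k`, and the slice of `Y` is
the rank-one (Schur complement) update `A p q - A p j * c * A i q`.

This update `B` satisfies `B x = A (x - c (A x)ᵢ eⱼ)` and `B eⱼ = 0`, so
`ker B = ker A ⊔ span {eⱼ}`. As `(A eⱼ)ᵢ = A i j ≠ 0`, the vector `eⱼ` is not in `ker A`; the nullity
goes up by exactly one and, by rank-nullity, the rank goes down by one.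
-/

open scoped BigOperators

/-- The discrete Fourier transform on `ZMod n`:
`(dft x) k = ∑ j, x j * exp(-2πi j k / n)`. -/
noncomputable def dft {n : ℕ} [NeZero n] (x : ZMod n → ℂ) : ZMod n → ℂ :=
  fun k => ∑ j : ZMod n,
    x j * Complex.exp (-(2 * (Real.pi : ℂ) * Complex.I * (j.val : ℂ) * (k.val : ℂ) / (n : ℂ)))

/-- Circular convolution of real tubes on `ZMod n`. -/
def conv {n : ℕ} [NeZero n] (a b : ZMod n → ℝ) : ZMod n → ℝ :=
  fun k => ∑ j : ZMod n, a j * b (k - j)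

/-- The identity tube `δ` for circular convolution. -/
def delta {n : ℕ} : ZMod n → ℝ := fun k => if k = 0 then 1 else 0

lemma dft_eq_stdAddChar {n : ℕ} [NeZero n] (x : ZMod n → ℂ) (k : ZMod n) :
    dft x k = ∑ j : ZMod n, x j * ZMod.stdAddChar (-(j * k)) := by
  unfold dft
  refine Finset.sum_congr rfl fun j _ => ?_
  have h : -(j * k) = ((-((j.val : ℤ) * (k.val : ℤ)) : ℤ) : ZMod n) := by
    push_cast
    simp
  rw [h, ZMod.stdAddChar_coe]
  congr 2
  push_cast
  ring

lemma dft_conv {n : ℕ} [NeZero n] (a b : ZMod n → ℝ) (k : ZMod n) :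
    dft (fun t => (conv a b t : ℂ)) k
      = dft (fun t => (a t : ℂ)) k * dft (fun t => (b t : ℂ)) k := by
  simp only [dft_eq_stdAddChar, conv]
  push_cast
  simp_rw [Finset.sum_mul]
  rw [Finset.sum_comm]
  refine Finset.sum_congr rfl fun j _ => ?_
  rw [Finset.mul_sum, ← Equiv.sum_comp (Equiv.addRight j)]
  refine Finset.sum_congr rfl fun t _ => ?_
  have h : -((t + j) * k) = -(j * k) + -(t * k) := by ring
  simp only [Equiv.coe_addRight, add_sub_cancel_right]
  rw [h, AddChar.map_add_eq_mul]
  ring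

lemma dft_delta {n : ℕ} [NeZero n] (k : ZMod n) :
    dft (fun t => ((delta t : ℝ) : ℂ)) k = 1 := by
  simp [dft_eq_stdAddChar, delta, apply_ite Complex.ofReal, ite_mul]

lemma dft_sub {n : ℕ} [NeZero n] (x y : ZMod n → ℂ) (k : ZMod n) :
    dft (fun t => x t - y t) k = dft x k - dft y k := by
  simp [dft, sub_mul, Finset.sum_sub_distrib]

/-- Wedderburn's rank reduction at an invertible entry, `c` being the inverse of `A i j`. -/
lemma rank_deflation {K : Type*} [Field K] {m l : ℕ} (A : Matrix (Fin m) (Fin l) K)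
    (i : Fin m) (j : Fin l) (c : K) (hc : A i j * c = 1) :
    (Matrix.of fun p q => A p q - A p j * c * A i q).rank + 1 = A.rank := by
  set B : Matrix (Fin m) (Fin l) K := Matrix.of fun p q => A p q - A p j * c * A i q with hB
  let e : Fin l → K := Pi.single j 1
  have hAe : ∀ p, A.mulVec e p = A p j := fun p => by simp [e]
  have hBx : ∀ x, B.mulVec x = A.mulVec (x - (c * A.mulVec x i) • e) := by
    intro x
    ext p
    rw [Matrix.mulVec_sub, Matrix.mulVec_smul]
    simp only [Pi.sub_apply, Pi.smul_apply, smul_eq_mul, hAe]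
    simp only [Matrix.mulVec, dotProduct, hB, Matrix.of_apply, sub_mul,
      Finset.sum_sub_distrib, Finset.mul_sum, Finset.sum_mul]
    congr 1
    exact Finset.sum_congr rfl fun q _ => by ring
  have hne : A i j ≠ 0 := left_ne_zero_of_mul_eq_one hc
  have he0 : e ≠ 0 := fun h => hne (by rw [← hAe, h]; simp)
  have hker : LinearMap.ker B.mulVecLin = LinearMap.ker A.mulVecLin ⊔ K ∙ e := by
    apply le_antisymm
    · intro x hx
      rw [LinearMap.mem_ker, Matrix.mulVecLin_apply, hBx] at hx
      rw [Submodule.mem_sup]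
      exact ⟨_, by simpa using hx, (c * A.mulVec x i) • e,
        Submodule.smul_mem _ _ (Submodule.mem_span_singleton_self e), sub_add_cancel _ _⟩
    · refine sup_le (fun x hx => ?_) ?_
      · rw [LinearMap.mem_ker, Matrix.mulVecLin_apply] at hx ⊢
        simp [hBx, hx]
      · rw [Submodule.span_singleton_le_iff_mem, LinearMap.mem_ker, Matrix.mulVecLin_apply, hBx,
          hAe, mul_comm c, hc]
        simp
  have hdis : LinearMap.ker A.mulVecLin ⊓ K ∙ e = ⊥ := by
    rw [← disjoint_iff, Submodule.disjoint_span_singleton' he0]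
    intro h
    rw [LinearMap.mem_ker, Matrix.mulVecLin_apply] at h
    exact hne (by rw [← hAe, h]; rfl)
  have h1 := Submodule.finrank_sup_add_finrank_inf_eq (LinearMap.ker A.mulVecLin) (K ∙ e)
  rw [hdis, ← hker, finrank_bot, finrank_span_singleton he0] at h1
  have h2 := A.mulVecLin.finrank_range_add_finrank_ker
  have h3 := B.mulVecLin.finrank_range_add_finrank_ker
  unfold Matrix.rank
  omega

/-- Tubal rank-one deflation (Theorem 2 of the paper), slice-wise form:
every frontal Fourier slice of the residual
`Y = X - X(:,j,:) * (X(i,j,:))⁻¹ * X(i,:,:)` has rank one less than the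
corresponding frontal Fourier slice of `X`. -/
theorem tubal_rank_one_deflation {n I₁ I₂ : ℕ} [NeZero n]
    (X : Fin I₁ → Fin I₂ → (ZMod n → ℝ)) (i : Fin I₁) (j : Fin I₂)
    (s : ZMod n → ℝ) (hs : conv (X i j) s = delta)
    (Y : Fin I₁ → Fin I₂ → (ZMod n → ℝ))
    (hY : ∀ p q, Y p q = X p q - conv (conv (X p j) s) (X i q)) (k : ZMod n) :
    (Matrix.of fun p q => dft (fun t => ((Y p q) t : ℂ)) k).rank =
      (Matrix.of fun p q => dft (fun t => ((X p q) t : ℂ)) k).rank - 1 := by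
  have hc : dft (fun t => (X i j t : ℂ)) k * dft (fun t => (s t : ℂ)) k = 1 := by
    rw [← dft_conv, hs, dft_delta]
  have h := rank_deflation (Matrix.of fun p q => dft (fun t => ((X p q) t : ℂ)) k) i j _ hc
  rw [← h, Nat.add_sub_cancel]
  congr 2
  ext p q
  simp only [hY, Pi.sub_apply, Complex.ofReal_sub, Matrix.of_apply]
  rw [dft_sub, dft_conv, dft_conv]
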